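/- Let n, k be natural numbers, let f be a k-regulous function on ℝⁿ, and let U = D(f) = {x : f(x) ≠ 0}. Let R^k(U) denote the ring of functions g : U → ℝ that are k-regulous on U, and let ρ : R^k(ℝⁿ) → R^k(U) be the ring homomorphism given by restriction. Then ρ identifies R^k(U) with the localization of R^k(ℝⁿ) away from f: ρ(f) is a unit, every element of R^k(U) can be written as ρ(g)·ρ(f)^{-N} for some g ∈ R^k(ℝⁿ) and N ∈ ℕ, and for g ∈ R^k(ℝⁿ), ρ(g) = 0 if and only if f·g = 0 in R^k(ℝⁿ). Equivalently, the induced map from the localization R^k(ℝⁿ)_f to R^k(U) is a ring isomorphism. -/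

import Mathlib

open MvPolynomial

/-- A function `f : ℝⁿ → ℝ` is `k`-regulous if it is of class `C^k` on all of `ℝⁿ` and
agrees with a rational function: there are polynomials `p`, `q` with `q ≠ 0` and
`q(x) * f(x) = p(x)` for every `x`. -/
def IsRegulous (n k : ℕ) (f : (Fin n → ℝ) → ℝ) : Prop :=
  ContDiff ℝ k f ∧ ∃ p q : MvPolynomial (Fin n) ℝ, q ≠ 0 ∧
    ∀ x : Fin n → ℝ, eval x q * f x = eval x p

/-- The ring `R^k(ℝⁿ)` of `k`-regulous functions, as a subring of the ring of all
functions `ℝⁿ → ℝ` with pointwise operations. -/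
def regulousRing (n k : ℕ) : Subring ((Fin n → ℝ) → ℝ) where
  carrier := {f | IsRegulous n k f}
  one_mem' := ⟨contDiff_const, 1, 1, one_ne_zero, by simp⟩
  zero_mem' := ⟨contDiff_const, 0, 1, one_ne_zero, by simp⟩
  mul_mem' := by
    rintro f g ⟨hf, p₁, q₁, hq₁, h₁⟩ ⟨hg, p₂, q₂, hq₂, h₂⟩
    refine ⟨hf.mul hg, p₁ * p₂, q₁ * q₂, mul_ne_zero hq₁ hq₂, fun x => ?_⟩
    simp only [eval_mul, Pi.mul_apply]
    linear_combination (eval x q₂ * g x) * h₁ x + eval x p₁ * h₂ x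
  add_mem' := by
    rintro f g ⟨hf, p₁, q₁, hq₁, h₁⟩ ⟨hg, p₂, q₂, hq₂, h₂⟩
    refine ⟨hf.add hg, p₁ * q₂ + p₂ * q₁, q₁ * q₂, mul_ne_zero hq₁ hq₂, fun x => ?_⟩
    simp only [eval_mul, eval_add, Pi.add_apply]
    linear_combination (eval x q₂) * h₁ x + (eval x q₁) * h₂ x
  neg_mem' := by
    rintro f ⟨hf, p, q, hq, h⟩
    refine ⟨hf.neg, -p, q, hq, fun x => ?_⟩
    simp only [map_neg, Pi.neg_apply]
    linear_combination -(h x)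

/-- A function `g : U → ℝ` defined on an open subset `U ⊆ ℝⁿ` is `k`-regulous on `U` if it
is of class `C^k` on `U` and agrees on `U` with a rational function `p/q`. -/
def IsRegulousOn (n k : ℕ) (U : Set (Fin n → ℝ)) (g : U → ℝ) : Prop :=
  ContDiffOn ℝ k (Function.extend Subtype.val g 0) U ∧
  ∃ p q : MvPolynomial (Fin n) ℝ, q ≠ 0 ∧
    ∀ x : U, eval (x : Fin n → ℝ) q * g x = eval (x : Fin n → ℝ) p

open MvPolynomial
namespace Reg
open Polynomial Set

lemma mono_of_sign (Q : ℝ[X]) (a b : ℝ) 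
    (h : ∀ z ∈ Icc a b, 0 ≤ (derivative Q).eval z) : MonotoneOn (fun z => Q.eval z) (Icc a b) := by
  apply monotoneOn_of_deriv_nonneg (convex_Icc a b) Q.continuous.continuousOn
    Q.differentiable.differentiableOn
  intro x hx
  rw [Polynomial.deriv]
  exact h x (interior_subset hx)

lemma anti_of_sign (Q : ℝ[X]) (a b : ℝ) 
    (h : ∀ z ∈ Icc a b, (derivative Q).eval z ≤ 0) : AntitoneOn (fun z => Q.eval z) (Icc a b) := by
  apply antitoneOn_of_deriv_nonpos (convex_Icc a b) Q.continuous.continuousOn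
    Q.differentiable.differentiableOn
  intro x hx
  rw [Polynomial.deriv]
  exact h x (interior_subset hx)

lemma sign_between {u v w : ℝ} (h1 : u ≤ v) (h2 : v ≤ w) 
    (h : SignType.sign u = SignType.sign w) : SignType.sign v = SignType.sign u := by
  have a1 := SignType.sign.monotone h1
  have a2 := SignType.sign.monotone h2
  rw [← h] at a2
  exact le_antisymm a2 a1

lemma sign_nonneg_congr {u v : ℝ} (h : SignType.sign u = SignType.sign v) (hu : 0 ≤ u) : 0 ≤ v := by
  rw [← sign_nonneg_iff] at hu ⊢; rwa [← h]
lemma sign_nonpos_congr {u v : ℝ} (h : SignType.sign u = SignType.sign v) (hu : u ≤ 0) : v ≤ 0 := by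
  rw [← sign_nonpos_iff] at hu ⊢; rwa [← h]
lemma sign_pos_congr {u v : ℝ} (h : SignType.sign u = SignType.sign v) (hu : 0 < u) : 0 < v := by
  rw [← sign_eq_one_iff] at hu ⊢; rwa [← h]
lemma sign_neg_congr {u v : ℝ} (h : SignType.sign u = SignType.sign v) (hu : u < 0) : v < 0 := by
  rw [← sign_eq_neg_one_iff] at hu ⊢; rwa [← h]
lemma sign_zero_congr {u v : ℝ} (h : SignType.sign u = SignType.sign v) (hu : u = 0) : v = 0 := by
  rw [← sign_eq_zero_iff] at hu ⊢; rwa [← h]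

lemma thom_aux (d : ℕ) : ∀ (Q : ℝ[X]), Q.natDegree ≤ d → ∀ (a b : ℝ), 
    (∀ i, SignType.sign ((derivative^[i] Q).eval a) = SignType.sign ((derivative^[i] Q).eval b)) →
    ∀ z ∈ Icc a b, SignType.sign (Q.eval z) = SignType.sign (Q.eval a) := by
  induction d with
  | zero =>
    intro Q hQ a b h z hz
    rw [Polynomial.eq_C_of_natDegree_le_zero hQ]; simp
  | succ d ih =>
    intro Q hQ a b h z hz
    have hab : a ≤ b := hz.1.trans hz.2
    have h0 := h 0
    have hd : ∀ z ∈ Icc a b, SignType.sign ((derivative Q).eval z) = SignType.sign ((derivative Q).eval a) := by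
      refine ih _ ((natDegree_derivative_le Q).trans (by omega)) a b (fun i => ?_)
      simpa using h (i+1)
    rcases le_total 0 ((derivative Q).eval a) with hs | hs
    · have hm := mono_of_sign Q a b (fun z hz => sign_nonneg_congr (hd z hz).symm hs)
      exact sign_between (hm ⟨le_rfl, hab⟩ hz hz.1) (hm hz ⟨hab, le_rfl⟩ hz.2) h0
    · have hm := anti_of_sign Q a b (fun z hz => sign_nonpos_congr (hd z hz).symm hs)
      rw [sign_between (hm hz ⟨hab, le_rfl⟩ hz.2) (hm ⟨le_rfl, hab⟩ hz hz.1) h0.symm]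
      exact h0.symm

lemma thom (Q : ℝ[X]) (a b : ℝ)
    (h : ∀ i, SignType.sign ((derivative^[i] Q).eval a) = SignType.sign ((derivative^[i] Q).eval b)) :
    ∀ z ∈ uIcc a b, SignType.sign (Q.eval z) = SignType.sign (Q.eval a) := by
  intro z hz
  rcases le_total a b with hab | hab
  · rw [uIcc_of_le hab] at hz
    exact thom_aux _ Q le_rfl a b h z hz
  · rw [uIcc_of_ge hab] at hz
    rw [thom_aux _ Q le_rfl b a (fun i => (h i).symm) z hz]
    exact (h 0).symm

/-- sign constancy where no roots -/
lemma sign_const (Q : ℝ[X]) (a b : ℝ) (h : ∀ z ∈ uIcc a b, Q.eval z ≠ 0) :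
    SignType.sign (Q.eval a) = SignType.sign (Q.eval b) := by
  have hi := intermediate_value_uIcc (f := fun z => Q.eval z) (a := a) (b := b) Q.continuous.continuousOn
  by_contra hne
  have : (0:ℝ) ∈ uIcc (Q.eval a) (Q.eval b) := by
    rw [mem_uIcc]
    rcases lt_trichotomy (Q.eval a) 0 with h1 | h1 | h1 <;>
    rcases lt_trichotomy (Q.eval b) 0 with h2 | h2 | h2 <;>
    first
    | (left; constructor <;> linarith)
    | (right; constructor <;> linarith)
    | (exfalso; exact hne (by simp [h1, h2]))
  obtain ⟨z, hz, hz0⟩ := hi this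
  exact h z hz hz0

variable {A : Type*} [CommRing A]

def Rel (φ ψ : A →+* ℝ) (S : Finset A[X]) (x y : ℝ) : Prop :=
  ∀ P ∈ S, SignType.sign ((P.map φ).eval x) = SignType.sign ((P.map ψ).eval y)

def DClosed (S : Finset A[X]) : Prop := ∀ P ∈ S, derivative P ∈ S

lemma DClosed.iter {S : Finset A[X]} (hS : DClosed S) {P : A[X]} (hP : P ∈ S) (i : ℕ) :
    derivative^[i] P ∈ S := by
  induction i with
  | zero => exact hP
  | succ i ih => rw [Function.iterate_succ_apply']; exact hS _ ih

lemma map_iter (φ : A →+* ℝ) (P : A[X]) (i : ℕ) :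
    derivative^[i] (P.map φ) = (derivative^[i] P).map φ := by
  induction i with
  | zero => rfl
  | succ i ih => rw [Function.iterate_succ_apply', ih, Function.iterate_succ_apply', derivative_map]

lemma Rel.symm {φ ψ : A →+* ℝ} {S : Finset A[X]} {x y : ℝ} (h : Rel φ ψ S x y) : Rel ψ φ S y x :=
  fun P hP => (h P hP).symm
lemma Rel.trans {φ ψ χ : A →+* ℝ} {S : Finset A[X]} {x y z : ℝ} (h : Rel φ ψ S x y)
    (h' : Rel ψ χ S y z) : Rel φ χ S x z :=
  fun P hP => (h P hP).trans (h' P hP)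

lemma Rel.convex {φ ψ : A →+* ℝ} {S : Finset A[X]} (hS : DClosed S) {x a b z : ℝ} 
    (ha : Rel φ ψ S x a) (hb : Rel φ ψ S x b) (hz : z ∈ uIcc a b) : Rel φ ψ S x z := by
  intro P hP
  rw [thom (P.map ψ) a b (fun i => ?_) z hz]
  · exact ha P hP
  · rw [map_iter]; exact ((ha.symm.trans hb) _ (hS.iter hP i))

/-- order is determined by sign vectors -/
lemma Rel.mono {φ ψ : A →+* ℝ} {S : Finset A[X]} (hS : DClosed S) {x y x' y' : ℝ}
    (h : Rel φ ψ S x y) (h' : Rel φ ψ S x' y') (hxx : x < x') (hne : ¬ Rel φ φ S x x') : y < y' := by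
  by_contra hyy
  push Not at hyy
  have hne' : (S.filter (fun P => ¬ SignType.sign ((P.map φ).eval x) = SignType.sign ((P.map φ).eval x'))).Nonempty := by
    by_contra hcon
    rw [Finset.not_nonempty_iff_eq_empty, Finset.filter_eq_empty_iff] at hcon
    exact hne (fun P hP => not_not.mp (hcon hP))
  obtain ⟨P, hP, hmin⟩ := Finset.exists_min_image _ (fun P => P.natDegree) hne'
  simp only [Finset.mem_filter] at hP hmin
  obtain ⟨hPS, hPne⟩ := hP
  have hdeg : P.natDegree ≠ 0 := by
    intro h0
    apply hPne
    rw [Polynomial.eq_C_of_natDegree_le_zero h0.le]; simp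
  have hder : ∀ i, SignType.sign (((derivative^[i] (derivative P)).map φ).eval x) = 
      SignType.sign (((derivative^[i] (derivative P)).map φ).eval x') := by
    intro i
    by_contra hc
    have h1 := hmin _ ⟨hS.iter (hS _ hPS) i, hc⟩
    have h2 := natDegree_derivative_lt hdeg
    have h3 := natDegree_iterate_derivative (derivative P) i
    omega
  have hder2 : ∀ i, SignType.sign (((derivative^[i] (derivative P)).map ψ).eval y') = 
      SignType.sign (((derivative^[i] (derivative P)).map ψ).eval y) := by
    intro i
    have hm := hS.iter (hS _ hPS) i
    rw [← h _ hm, ← h' _ hm, hder]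
  have t1 := thom_aux _ (derivative (P.map φ)) le_rfl x x' (fun i => by
    rw [derivative_map, map_iter]; exact hder i)
  have t2 := thom_aux _ (derivative (P.map ψ)) le_rfl y' y (fun i => by
    rw [derivative_map, map_iter]; exact hder2 i)
  have hs : SignType.sign ((derivative (P.map φ)).eval x) = SignType.sign ((derivative (P.map ψ)).eval y') := by
    rw [derivative_map, derivative_map]; exact (h _ (hS _ hPS)).trans (hder2 0).symm
  have e1 := h _ hPS
  have e2 := h' _ hPS
  rcases le_total 0 ((derivative (P.map φ)).eval x) with h0 | h0
  · have m1 := mono_of_sign (P.map φ) x x' (fun z hz => sign_nonneg_congr (t1 z hz).symm h0)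
    have m2 := mono_of_sign (P.map ψ) y' y (fun z hz => sign_nonneg_congr (t2 z hz).symm 
      (sign_nonneg_congr hs h0))
    have m1 := SignType.sign.monotone (m1 ⟨le_rfl, hxx.le⟩ ⟨hxx.le, le_rfl⟩ hxx.le)
    have m2 := SignType.sign.monotone (m2 ⟨le_rfl, hyy⟩ ⟨hyy, le_rfl⟩ hyy)
    simp only at m1 m2
    rw [← e1, ← e2] at m2
    exact hPne (le_antisymm m1 m2)
  · have m1 := anti_of_sign (P.map φ) x x' (fun z hz => sign_nonpos_congr (t1 z hz).symm h0)
    have m2 := anti_of_sign (P.map ψ) y' y (fun z hz => sign_nonpos_congr (t2 z hz).symm 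
      (sign_nonpos_congr hs h0))
    have m1 := SignType.sign.monotone (m1 ⟨le_rfl, hxx.le⟩ ⟨hxx.le, le_rfl⟩ hxx.le)
    have m2 := SignType.sign.monotone (m2 ⟨le_rfl, hyy⟩ ⟨hyy, le_rfl⟩ hyy)
    simp only at m1 m2
    rw [← e1, ← e2] at m2
    exact hPne (le_antisymm m2 m1)
end Reg

open MvPolynomial
namespace Reg
open Polynomial Set

/-- abstract matching of root sets -/
structure Mat (R : ℝ → ℝ → Prop) (Z1 Z2 : Set ℝ) : Prop where
  fin1 : Z1.Finite
  tot1 : ∀ x, ∃ y, R x y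
  tot2 : ∀ y, ∃ x, R x y
  zz : ∀ x y, R x y → (x ∈ Z1 ↔ y ∈ Z2)
  mono : ∀ x y x' y', R x y → R x' y' → x < x' → (x ∈ Z1 ∨ x' ∈ Z1) → y < y'
  fn : ∀ x y y', R x y → R x y' → x ∈ Z1 → y = y'
  cell : ∀ x y z, R x y → (∀ t ∈ uIcc y z, t ∉ Z2) → R x z

lemma Mat.neg {R : ℝ → ℝ → Prop} {Z1 Z2 : Set ℝ} (h : Mat R Z1 Z2) :
    Mat (fun x y => R (-x) (-y)) {x | -x ∈ Z1} {x | -x ∈ Z2} where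
  fin1 := h.fin1.preimage neg_injective.injOn
  tot1 x := by obtain ⟨y, hy⟩ := h.tot1 (-x); exact ⟨-y, by simpa using hy⟩
  tot2 x := by obtain ⟨y, hy⟩ := h.tot2 (-x); exact ⟨-y, by simpa using hy⟩
  zz x y hxy := h.zz _ _ hxy
  mono x y x' y' h1 h2 hlt hz := by
    have := h.mono _ _ _ _ h2 h1 (neg_lt_neg hlt) hz.symm
    linarith
  fn x y y' h1 h2 hz := neg_injective (h.fn _ _ _ h1 h2 hz)
  cell x y z h1 h2 := by
    refine h.cell _ _ _ h1 (fun t ht => ?_)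
    have := h2 (-t) (by rw [mem_uIcc] at ht ⊢; rcases ht with h | h
                        · right; constructor <;> linarith
                        · left; constructor <;> linarith)
    simpa using this

lemma Mat.up {R : ℝ → ℝ → Prop} {Z1 Z2 : Set ℝ} (h : Mat R Z1 Z2) (f1 f2 : ℝ → ℝ)
    (hf2 : Continuous f2) {x y : ℝ} (hxy : R x y) (hx : x ∉ Z1) (hpos : 0 < f1 x)
    (hinc : ∀ z, x < z → (∀ t, x ≤ t → t < z → t ∉ Z1) → f1 x ≤ f1 z)
    (hsgn : ∀ a b, R a b → a ∈ Z1 → SignType.sign (f1 a) = SignType.sign (f2 b))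
    (htail : (∀ t, y ≤ t → t ∉ Z2) → ∃ z, y ≤ z ∧ 0 < f2 z) :
    ∃ z, R x z ∧ 0 < f2 z := by
  have hy : y ∉ Z2 := fun hc => hx ((h.zz x y hxy).2 hc)
  -- pulling back roots above y
  have pull : ∀ c', c' ∈ Z2 → y < c' → ∃ c ∈ Z1, x < c ∧ R c c' := by
    intro c' hc' hlt
    obtain ⟨c, hc⟩ := h.tot2 c'
    have hcZ := (h.zz _ _ hc).2 hc'
    refine ⟨c, hcZ, ?_, hc⟩
    rcases lt_trichotomy x c with h1 | h1 | h1
    · exact h1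
    · exact absurd (h1 ▸ hcZ) hx
    · exact absurd (h.mono _ _ _ _ hc hxy h1 (Or.inl hcZ)) (not_lt.2 hlt.le)
  by_cases hE : (Z1 ∩ Ioi x).Nonempty
  · obtain ⟨b, ⟨hbZ, hxb⟩, hmin⟩ := Set.exists_min_image _ id (h.fin1.inter_of_left _) hE
    simp only [id] at hmin
    have hxb : x < b := hxb
    obtain ⟨b', hb⟩ := h.tot1 b
    have hyb : y < b' := h.mono _ _ _ _ hxy hb hxb (Or.inr hbZ)
    have hfb : 0 < f2 b' := by
      refine sign_pos_congr (hsgn _ _ hb hbZ) (hpos.trans_le (hinc b hxb ?_))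
      intro t ht1 ht2 htZ
      rcases ht1.eq_or_lt with h1 | h1
      · exact hx (h1 ▸ htZ)
      · exact absurd (hmin t ⟨htZ, h1⟩) (not_le.2 ht2)
    have hev : ∀ᶠ z in nhdsWithin b' (Iio b'), 0 < f2 z ∧ y < z ∧ z < b' := by
      have h1 : ∀ᶠ z in nhdsWithin b' (Iio b'), 0 < f2 z :=
        nhdsWithin_le_nhds (hf2.continuousAt.eventually (lt_mem_nhds hfb))
      have h2 : ∀ᶠ z in nhdsWithin b' (Iio b'), y < z := nhdsWithin_le_nhds (lt_mem_nhds hyb)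
      filter_upwards [h1, h2, self_mem_nhdsWithin] with z a b c
      exact ⟨a, b, c⟩
    obtain ⟨z, hz, hyz, hzb⟩ := hev.exists
    refine ⟨z, h.cell _ _ _ hxy ?_, hz⟩
    intro t ht htZ
    rw [uIcc_of_le hyz.le] at ht
    have hyt : y < t := lt_of_le_of_ne ht.1 (fun e => hy (e ▸ htZ))
    obtain ⟨c, hcZ, hxc, hR⟩ := pull t htZ hyt
    have hbc := hmin c ⟨hcZ, hxc⟩
    rcases hbc.eq_or_lt with e | e
    · subst e
      have := h.fn _ _ _ hb hR hcZ
      linarith [ht.2]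
    · have := h.mono _ _ _ _ hb hR e (Or.inl hbZ)
      linarith [ht.2]
  · have hno : ∀ t, y ≤ t → t ∉ Z2 := by
      intro t ht htZ
      have hyt : y < t := lt_of_le_of_ne ht (fun e => hy (e ▸ htZ))
      obtain ⟨c, hcZ, hxc, -⟩ := pull t htZ hyt
      exact hE ⟨c, hcZ, hxc⟩
    obtain ⟨z, hyz, hz⟩ := htail hno
    refine ⟨z, h.cell _ _ _ hxy ?_, hz⟩
    intro t ht
    rw [uIcc_of_le hyz] at ht
    exact hno t ht.1

lemma tail_pos (Q : ℝ[X]) (y : ℝ) (h : ∀ z, y ≤ z → 0 < (derivative Q).eval z) :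
    ∃ z, y ≤ z ∧ 0 < Q.eval z := by
  have hmono : MonotoneOn (fun z => Q.eval z) (Ici y) := by
    apply monotoneOn_of_deriv_nonneg (convex_Ici y) Q.continuous.continuousOn
      Q.differentiable.differentiableOn
    intro x hx
    rw [Polynomial.deriv]
    exact (h x (interior_subset hx)).le
  have hdeg : 0 < Q.degree := by
    by_contra hc
    have h1 := Polynomial.eq_C_of_degree_le_zero (not_lt.1 hc)
    have := h y le_rfl
    rw [h1] at this; simp at this
  rcases le_total 0 Q.leadingCoeff with hl | hl
  · have := Polynomial.tendsto_atTop_of_leadingCoeff_nonneg Q hdeg hl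
    obtain ⟨z, h1, h2⟩ := ((Filter.eventually_ge_atTop y).and (this.eventually_gt_atTop 0)).exists
    exact ⟨z, h1, h2⟩
  · have := Polynomial.tendsto_atBot_of_leadingCoeff_nonpos Q hdeg hl
    obtain ⟨z, h1, h2⟩ := ((Filter.eventually_ge_atTop y).and (this.eventually_lt_atBot (Q.eval y))).exists
    exact absurd (hmono self_mem_Ici (mem_Ici.2 h1) h1) (not_le.2 h2)

/-- The version for polynomials, with derivative signs controlled by the relation,
increasing case. -/
lemma Mat.up_poly {R : ℝ → ℝ → Prop} {Z1 Z2 : Set ℝ} (h : Mat R Z1 Z2) (P1 P2 : ℝ[X])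
    {x y : ℝ} (hxy : R x y) (hx : x ∉ Z1) (hpos : 0 < P1.eval x)
    (hd1 : ∀ t, (∀ s ∈ uIcc x t, s ∉ Z1) → 0 < (derivative P1).eval t)
    (hd2 : ∀ t, (∀ s ∈ uIcc y t, s ∉ Z2) → 0 < (derivative P2).eval t)
    (hsgn : ∀ a b, R a b → a ∈ Z1 → SignType.sign (P1.eval a) = SignType.sign (P2.eval b)) :
    ∃ z, R x z ∧ 0 < P2.eval z := by
  refine h.up (fun t => P1.eval t) (fun t => P2.eval t) P2.continuous hxy hx hpos ?_ hsgn ?_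
  · intro z hxz hz
    have hm : MonotoneOn (fun z => P1.eval z) (Icc x z) := by
      apply monotoneOn_of_deriv_nonneg (convex_Icc x z) P1.continuous.continuousOn
        P1.differentiable.differentiableOn
      intro t ht
      rw [interior_Icc] at ht
      rw [Polynomial.deriv]
      refine (hd1 t (fun s hs => ?_)).le
      rw [uIcc_of_le ht.1.le] at hs
      exact hz s hs.1 (hs.2.trans_lt ht.2)
    exact hm ⟨le_rfl, hxz.le⟩ ⟨hxz.le, le_rfl⟩ hxz.le
  · intro hno
    apply tail_pos
    intro z hz
    apply hd2
    intro s hs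
    rw [uIcc_of_le hz] at hs
    exact hno s hs.1

/-- all derivative signs -/
lemma Mat.pos_poly {R : ℝ → ℝ → Prop} {Z1 Z2 : Set ℝ} (h : Mat R Z1 Z2) (P1 P2 : ℝ[X])
    {x y : ℝ} (hxy : R x y) (hx : x ∉ Z1) (hpos : 0 < P1.eval x) (e : SignType) (he : e ≠ 0)
    (hd1 : ∀ t, (∀ s ∈ uIcc x t, s ∉ Z1) → SignType.sign ((derivative P1).eval t) = e)
    (hd2 : ∀ t, (∀ s ∈ uIcc y t, s ∉ Z2) → SignType.sign ((derivative P2).eval t) = e)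
    (hsgn : ∀ a b, R a b → a ∈ Z1 → SignType.sign (P1.eval a) = SignType.sign (P2.eval b)) :
    ∃ z, R x z ∧ 0 < P2.eval z := by
  cases e with
  | zero => exact absurd rfl he
  | pos =>
    exact h.up_poly P1 P2 hxy hx hpos (fun t ht => sign_eq_one_iff.1 (hd1 t ht))
      (fun t ht => sign_eq_one_iff.1 (hd2 t ht)) hsgn
  | neg =>
    have key : ∀ a t : ℝ, ∀ Z : Set ℝ, (∀ s ∈ uIcc (-a) t, s ∉ {x | -x ∈ Z}) → ∀ s ∈ uIcc a (-t), s ∉ Z := by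
      intro a t Z hZ s hs
      have := hZ (-s) (by rw [mem_uIcc] at hs ⊢; rcases hs with h | h
                          · right; constructor <;> linarith
                          · left; constructor <;> linarith)
      simpa using this
    obtain ⟨z, hz, hz0⟩ := h.neg.up_poly (P1.comp (-Polynomial.X)) (P2.comp (-Polynomial.X)) (x := -x) (y := -y)
      (by simpa using hxy) (by simpa using hx) (by simpa using hpos)
      (fun t ht => by
        have := sign_eq_neg_one_iff.1 (hd1 (-t) (key _ _ _ ht))
        simp [derivative_comp]; exact this)
      (fun t ht => by
        have := sign_eq_neg_one_iff.1 (hd2 (-t) (key _ _ _ ht))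
        simp [derivative_comp]; exact this)
      (fun a b hab ha => by simpa using hsgn _ _ hab ha)
    refine ⟨-z, by simpa using hz, by simpa using hz0⟩

lemma Mat.neg_poly {R : ℝ → ℝ → Prop} {Z1 Z2 : Set ℝ} (h : Mat R Z1 Z2) (P1 P2 : ℝ[X])
    {x y : ℝ} (hxy : R x y) (hx : x ∉ Z1) (hpos : P1.eval x < 0) (e : SignType) (he : e ≠ 0)
    (hd1 : ∀ t, (∀ s ∈ uIcc x t, s ∉ Z1) → SignType.sign ((derivative P1).eval t) = e)
    (hd2 : ∀ t, (∀ s ∈ uIcc y t, s ∉ Z2) → SignType.sign ((derivative P2).eval t) = e)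
    (hsgn : ∀ a b, R a b → a ∈ Z1 → SignType.sign (P1.eval a) = SignType.sign (P2.eval b)) :
    ∃ z, R x z ∧ P2.eval z < 0 := by
  obtain ⟨z, hz, hz0⟩ := h.pos_poly (-P1) (-P2) hxy hx (by simpa using hpos) (-e) (by simpa using he)
    (fun t ht => by rw [derivative_neg, Polynomial.eval_neg, Left.sign_neg, hd1 t ht])
    (fun t ht => by rw [derivative_neg, Polynomial.eval_neg, Left.sign_neg, hd2 t ht])
    (fun a b hab ha => by
      rw [Polynomial.eval_neg, Polynomial.eval_neg, Left.sign_neg, Left.sign_neg, hsgn a b hab ha])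
  exact ⟨z, hz, by simpa using hz0⟩
end Reg

open MvPolynomial
namespace Reg
open Polynomial Set
variable {A : Type*} [CommRing A]

def Zs (φ : A →+* ℝ) (S : Finset A[X]) : Set ℝ :=
  {x | ∃ Q ∈ S, Q.map φ ≠ 0 ∧ (Q.map φ).eval x = 0}

lemma Zs_finite (φ : A →+* ℝ) (S : Finset A[X]) : (Zs φ S).Finite := by
  have : Zs φ S ⊆ ⋃ Q ∈ S, ((Q.map φ).roots.toFinset : Set ℝ) := by
    rintro x ⟨Q, hQ, h0, h1⟩
    simp only [mem_iUnion]
    exact ⟨Q, hQ, by simp [h0]; simpa using h1⟩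
  exact (Set.Finite.biUnion S.finite_toSet (fun Q _ => Finset.finite_toSet _)).subset this

lemma not_same {φ : A →+* ℝ} {S : Finset A[X]} (hS : DClosed S) {x x' : ℝ} (hx : x ∈ Zs φ S)
    (hne : x ≠ x') : ¬ Rel φ φ S x x' := by
  intro h
  obtain ⟨Q, hQ, h0, h1⟩ := hx
  apply h0
  apply Polynomial.eq_zero_of_infinite_isRoot
  refine Set.Infinite.mono ?_ (Set.Icc_infinite (min_lt_max.2 hne))
  intro z hz
  have hr : Rel φ φ S x x := fun _ _ => rfl
  exact sign_zero_congr (hr.convex hS h hz Q hQ) h1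

lemma sign_cell {φ : A →+* ℝ} {S : Finset A[X]} {x x' : ℝ} (h : ∀ t ∈ uIcc x x', t ∉ Zs φ S) :
    Rel φ φ S x x' := by
  intro Q hQ
  by_cases h0 : Q.map φ = 0
  · simp [h0]
  · exact sign_const _ _ _ (fun z hz h1 => h z hz ⟨Q, hQ, h0, h1⟩)

lemma Zs_iff {φ ψ : A →+* ℝ} {S : Finset A[X]} (hnz : ∀ Q ∈ S, Q.map φ = 0 ↔ Q.map ψ = 0)
    {x y : ℝ} (h : Rel φ ψ S x y) : x ∈ Zs φ S ↔ y ∈ Zs ψ S := by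
  constructor
  · rintro ⟨Q, hQ, h0, h1⟩
    exact ⟨Q, hQ, fun h => h0 ((hnz Q hQ).2 h), sign_zero_congr (h Q hQ) h1⟩
  · rintro ⟨Q, hQ, h0, h1⟩
    exact ⟨Q, hQ, fun h => h0 ((hnz Q hQ).1 h), sign_zero_congr (h Q hQ).symm h1⟩

lemma mat {φ ψ : A →+* ℝ} {S : Finset A[X]} (hS : DClosed S)
    (hnz : ∀ Q ∈ S, Q.map φ = 0 ↔ Q.map ψ = 0)
    (t1 : ∀ x, ∃ y, Rel φ ψ S x y) (t2 : ∀ y, ∃ x, Rel φ ψ S x y) :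
    Mat (Rel φ ψ S) (Zs φ S) (Zs ψ S) where
  fin1 := Zs_finite φ S
  tot1 := t1
  tot2 := t2
  zz x y h := Zs_iff hnz h
  mono x y x' y' h1 h2 hlt hz := by
    refine h1.mono hS h2 hlt ?_
    rcases hz with hz | hz
    · exact not_same hS hz hlt.ne
    · exact fun h => not_same hS hz hlt.ne' h.symm
  fn x y y' h1 h2 hz := by
    by_contra hne
    exact not_same hS ((Zs_iff hnz h1).1 hz) hne (h1.symm.trans h2)
  cell x y z h1 h2 := h1.trans (sign_cell h2)

lemma strict_vals (P : ℝ[X]) (a b x : ℝ) (hax : a < x) (hxb : x < b) (h0 : P.eval x = 0)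
    (e : SignType) (he : e ≠ 0)
    (hd : ∀ t ∈ Icc a b, SignType.sign ((derivative P).eval t) = e) :
    ∃ u ∈ Icc a b, ∃ v ∈ Icc a b, P.eval u < 0 ∧ 0 < P.eval v := by
  have hab : a < b := hax.trans hxb
  have ma : a ∈ Icc a b := ⟨le_rfl, hab.le⟩
  have mb : b ∈ Icc a b := ⟨hab.le, le_rfl⟩
  have mx : x ∈ Icc a b := ⟨hax.le, hxb.le⟩
  cases e with
  | zero => exact absurd rfl he
  | pos =>
    have hm : StrictMonoOn (fun z => P.eval z) (Icc a b) := by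
      apply strictMonoOn_of_deriv_pos (convex_Icc a b) P.continuous.continuousOn
      intro t ht
      rw [Polynomial.deriv]
      exact sign_eq_one_iff.1 (hd t (interior_subset ht))
    exact ⟨a, ma, b, mb, by simpa [h0] using hm ma mx hax, by simpa [h0] using hm mx mb hxb⟩
  | neg =>
    have hm : StrictAntiOn (fun z => P.eval z) (Icc a b) := by
      apply strictAntiOn_of_deriv_neg (convex_Icc a b) P.continuous.continuousOn
      intro t ht
      rw [Polynomial.deriv]
      exact sign_eq_neg_one_iff.1 (hd t (interior_subset ht))
    exact ⟨b, mb, a, ma, by simpa [h0] using hm mx mb hxb, by simpa [h0] using hm ma mx hax⟩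

lemma extend {φ ψ : A →+* ℝ} {S : Finset A[X]} (hS : DClosed S)
    (hnz : ∀ Q ∈ S, Q.map φ = 0 ↔ Q.map ψ = 0)
    (t1 : ∀ x, ∃ y, Rel φ ψ S x y) (t2 : ∀ y, ∃ x, Rel φ ψ S x y)
    (P : A[X]) (hP : derivative P ∈ S) (hP0 : (derivative P).map φ ≠ 0)
    (hsgn : ∀ a b, Rel φ ψ S a b → a ∈ Zs φ S →
      SignType.sign ((P.map φ).eval a) = SignType.sign ((P.map ψ).eval b)) (x : ℝ) :
    ∃ y, Rel φ ψ S x y ∧ SignType.sign ((P.map φ).eval x) = SignType.sign ((P.map ψ).eval y) := by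
  have M := mat hS hnz t1 t2
  obtain ⟨y, hy⟩ := t1 x
  by_cases hx : x ∈ Zs φ S
  · exact ⟨y, hy, hsgn x y hy hx⟩
  obtain ⟨e, hedef⟩ : ∃ e, e = SignType.sign (((derivative P).map φ).eval x) := ⟨_, rfl⟩
  have he : e ≠ 0 := by
    intro h
    rw [hedef, sign_eq_zero_iff] at h
    exact hx ⟨_, hP, hP0, h⟩
  have d1 : ∀ x', Rel φ φ S x x' → ∀ t, (∀ s ∈ uIcc x' t, s ∉ Zs φ S) →
      SignType.sign ((derivative (P.map φ)).eval t) = e := by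
    intro x' hx' t ht
    rw [derivative_map, hedef]
    exact ((hx'.trans (sign_cell ht)) _ hP).symm
  have d2 : ∀ t, (∀ s ∈ uIcc y t, s ∉ Zs ψ S) →
      SignType.sign ((derivative (P.map ψ)).eval t) = e := by
    intro t ht
    rw [derivative_map, hedef]
    exact ((hy.trans (sign_cell ht)) _ hP).symm
  have cpos : ∀ x', Rel φ φ S x x' → x' ∉ Zs φ S → 0 < (P.map φ).eval x' → 
      ∃ z, Rel φ ψ S x z ∧ 0 < (P.map ψ).eval z := by
    intro x' hr hx' hp
    obtain ⟨z, hz, h⟩ := M.pos_poly (P.map φ) (P.map ψ) (hr.symm.trans hy) hx' hp e he (d1 x' hr) d2 hsgn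
    exact ⟨z, hr.trans hz, h⟩
  have cneg : ∀ x', Rel φ φ S x x' → x' ∉ Zs φ S → (P.map φ).eval x' < 0 → 
      ∃ z, Rel φ ψ S x z ∧ (P.map ψ).eval z < 0 := by
    intro x' hr hx' hp
    obtain ⟨z, hz, h⟩ := M.neg_poly (P.map φ) (P.map ψ) (hr.symm.trans hy) hx' hp e he (d1 x' hr) d2 hsgn
    exact ⟨z, hr.trans hz, h⟩
  have hrefl : Rel φ φ S x x := fun _ _ => rfl
  rcases lt_trichotomy ((P.map φ).eval x) 0 with h0 | h0 | h0
  · obtain ⟨z, hz, h⟩ := cneg x hrefl hx h0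
    exact ⟨z, hz, by rw [sign_neg h0, sign_neg h]⟩
  · have hop : IsOpen (Zs φ S)ᶜ := (Zs_finite φ S).isClosed.isOpen_compl
    obtain ⟨ε, hε, hball⟩ := Metric.isOpen_iff.1 hop x hx
    have hI : ∀ t ∈ Icc (x - ε/2) (x + ε/2), t ∉ Zs φ S := by
      intro t ht
      apply hball
      rw [Metric.mem_ball, Real.dist_eq, abs_lt]
      constructor <;> linarith [ht.1, ht.2]
    have hI2 : ∀ t ∈ Icc (x - ε/2) (x + ε/2), ∀ s ∈ uIcc x t, s ∉ Zs φ S := by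
      intro t ht s hs
      apply hI
      exact (ordConnected_Icc.uIcc_subset ⟨by linarith, by linarith⟩ ht) hs
    obtain ⟨u, hu, v, hv, hu0, hv0⟩ := strict_vals (P.map φ) (x - ε/2) (x + ε/2) x (by linarith) (by linarith)
      h0 e he (fun t ht => d1 x hrefl t (hI2 t ht))
    obtain ⟨z1, hz1, h1⟩ := cneg u (sign_cell (hI2 u hu)) (hI u hu) hu0
    obtain ⟨z2, hz2, h2⟩ := cpos v (sign_cell (hI2 v hv)) (hI v hv) hv0
    have hi := intermediate_value_uIcc (f := fun z => (P.map ψ).eval z) (a := z1) (b := z2)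
      (P.map ψ).continuous.continuousOn
    obtain ⟨z, hz, hz0⟩ := hi (show (0:ℝ) ∈ _ from by rw [mem_uIcc]; left; exact ⟨h1.le, h2.le⟩)
    refine ⟨z, hz1.convex hS hz2 hz, ?_⟩
    simp only at hz0
    rw [h0, hz0]
  · obtain ⟨z, hz, h⟩ := cpos x hrefl hx h0
    exact ⟨z, hz, by rw [sign_pos h0, sign_pos h]⟩
end Reg

open MvPolynomial
namespace Reg
open Polynomial Set
variable {A : Type*} [CommRing A]

lemma exists_prem (Q : A[X]) (hQ : 0 < Q.natDegree) (d : ℕ) : ∀ P : A[X], P.natDegree ≤ d →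
    ∃ (R T : A[X]) (k : ℕ), R.degree < Q.degree ∧ 
      Polynomial.C (Q.leadingCoeff ^ k) * P = Q * T + R := by
  have hQ0 : Q ≠ 0 := by rintro rfl; simp at hQ
  induction d using Nat.strong_induction_on with
  | _ d ih =>
  intro P hP
  by_cases hlt : P.natDegree < Q.natDegree
  · exact ⟨P, 0, 0, degree_lt_degree hlt, by simp⟩
  · push Not at hlt
    have h1 : (Q.cancelLeads P).natDegree < P.natDegree :=
      natDegree_cancelLeads_lt_of_natDegree_le_natDegree hlt (hQ.trans_le hlt)
    obtain ⟨R, T, k, hR, hE⟩ := ih (d-1) (by omega) (Q.cancelLeads P) (by omega)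
    have hc : Q.cancelLeads P = Polynomial.C Q.leadingCoeff * P - 
        Polynomial.C P.leadingCoeff * Polynomial.X ^ (P.natDegree - Q.natDegree) * Q := by
      simp [cancelLeads, Nat.sub_eq_zero_of_le hlt]
    refine ⟨R, T + Polynomial.C (Q.leadingCoeff ^ k) * (Polynomial.C P.leadingCoeff * Polynomial.X ^ (P.natDegree - Q.natDegree)), k+1, hR, ?_⟩
    rw [hc] at hE
    rw [pow_succ, Polynomial.C_mul]
    linear_combination hE

open Classical in
noncomputable def prem (P Q : A[X]) : A[X] :=
  if h : 0 < Q.natDegree ∧ Q.natDegree ≤ P.natDegree then (exists_prem Q h.1 _ P le_rfl).choose else 0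

lemma prem_spec (P Q : A[X]) (h : 0 < Q.natDegree) (h2 : Q.natDegree ≤ P.natDegree) :
    (prem P Q).degree < Q.degree ∧ ∃ (T : A[X]) (k : ℕ), 
      Polynomial.C (Q.leadingCoeff ^ k) * P = Q * T + prem P Q := by
  rw [prem, dif_pos ⟨h, h2⟩]
  obtain ⟨T, k, h1, h2⟩ := (exists_prem Q h _ P le_rfl).choose_spec
  exact ⟨h1, T, k, h2⟩

lemma prem_deg (P Q : A[X]) : prem P Q = 0 ∨ ((prem P Q).degree < Q.degree ∧ Q.degree ≤ P.degree) := by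
  by_cases h : 0 < Q.natDegree ∧ Q.natDegree ≤ P.natDegree
  · right
    refine ⟨(prem_spec P Q h.1 h.2).1, ?_⟩
    have hP : P ≠ 0 := by rintro rfl; simp at h; omega
    rw [degree_eq_natDegree hP]
    exact degree_le_natDegree.trans (by exact_mod_cast h.2)
  · left; rw [prem, dif_neg h]

def Cl (e : ℕ) (M : Finset A[X]) : Prop :=
  (∀ P ∈ M, derivative P ∈ M ∨ (derivative P).degree < e) ∧
  (∀ P ∈ M, eraseLead P ∈ M ∨ (eraseLead P).degree < e) ∧
  (∀ P ∈ M, ∀ Q ∈ M, prem P Q ∈ M ∨ (prem P Q).degree < e)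

lemma deg_step {P R : A[X]} {e : ℕ} (h1 : R.degree < P.degree) (h2 : P.degree < (e + 1 : ℕ)) : R.degree < e := by
  refine h1.trans_le ?_
  by_cases hP : P = 0
  · simp [hP]
  rw [degree_eq_natDegree hP] at h2 ⊢
  exact_mod_cast Nat.le_of_lt_succ (by exact_mod_cast h2)

lemma exists_closed (e : ℕ) : ∀ M : Finset A[X], 0 ∈ M → Cl e M →
    ∃ M' : Finset A[X], M ⊆ M' ∧ 0 ∈ M' ∧ Cl 0 M' := by
  classical
  induction e with
  | zero => intro M h0 hM; exact ⟨M, Finset.Subset.refl _, h0, hM⟩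
  | succ e ih =>
    intro M h0 hM
    set N : Finset A[X] := M ∪ (M.image derivative ∪ (M.image eraseLead ∪ Finset.image₂ prem M M)) with hN
    have hMN : M ⊆ N := Finset.subset_union_left
    have hdeg : ∀ P ∈ N, P ∈ M ∨ P.degree < (e+1 : ℕ) := by
      intro P hP
      simp only [hN, Finset.mem_union, Finset.mem_image, Finset.mem_image₂] at hP
      rcases hP with h | ⟨Q, hQ, rfl⟩ | ⟨Q, hQ, rfl⟩ | ⟨Q, hQ, Q', hQ', rfl⟩
      · exact Or.inl h
      · exact hM.1 _ hQ
      · exact hM.2.1 _ hQ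
      · exact hM.2.2 _ hQ _ hQ'
    have hcl : Cl e N := by
      refine ⟨?_, ?_, ?_⟩
      · intro P hP
        rcases hdeg P hP with h | h
        · left; simp only [hN, Finset.mem_union, Finset.mem_image]; exact Or.inr (Or.inl ⟨P, h, rfl⟩)
        · by_cases hP0 : P = 0
          · left; rw [hP0]; simpa using hMN h0
          · right; exact deg_step (degree_derivative_lt hP0) h
      · intro P hP
        rcases hdeg P hP with h | h
        · left; simp only [hN, Finset.mem_union, Finset.mem_image]; exact Or.inr (Or.inr (Or.inl ⟨P, h, rfl⟩))
        · by_cases hP0 : P = 0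
          · left; rw [hP0]; simpa using hMN h0
          · right; exact deg_step (degree_eraseLead_lt hP0) h
      · intro P hP Q hQ
        rcases prem_deg P Q with hz | ⟨hz1, hz2⟩
        · left; rw [hz]; exact hMN h0
        rcases hdeg P hP with h | h
        · rcases hdeg Q hQ with h' | h'
          · left; simp only [hN, Finset.mem_union, Finset.mem_image₂]
            exact Or.inr (Or.inr (Or.inr ⟨P, h, Q, h', rfl⟩))
          · right; exact deg_step hz1 h'
        · right; exact deg_step (hz1.trans_le hz2) h
    obtain ⟨M', h1, h2, h3⟩ := ih N (hMN h0) hcl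
    exact ⟨M', hMN.trans h1, h2, h3⟩

structure Closed (M : Finset A[X]) : Prop where
  der : ∀ P ∈ M, derivative P ∈ M
  era : ∀ P ∈ M, eraseLead P ∈ M
  pre : ∀ P ∈ M, ∀ Q ∈ M, prem P Q ∈ M

lemma closure_exists (L : Finset A[X]) : ∃ M : Finset A[X], L ⊆ M ∧ Closed M := by
  classical
  obtain ⟨D, hD⟩ : ∃ D : ℕ, ∀ P ∈ insert 0 L, P.degree < D := by
    refine ⟨(insert 0 L).sup natDegree + 1, fun P hP => ?_⟩
    refine degree_le_natDegree.trans_lt ?_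
    have := Finset.le_sup (f := natDegree) hP
    exact_mod_cast Nat.lt_succ_of_le this
  obtain ⟨M, h1, h2, h3⟩ := exists_closed D (insert 0 L) (Finset.mem_insert_self _ _) 
    ⟨fun P hP => Or.inr (degree_derivative_le.trans_lt (hD P hP)), 
     fun P hP => Or.inr (eraseLead_degree_le.trans_lt (hD P hP)), 
     fun P hP Q hQ => by
      rcases prem_deg P Q with hz | ⟨hz1, hz2⟩
      · left; rw [hz]; exact Finset.mem_insert_self _ _
      · right; exact (hz1.trans_le hz2).trans (hD P hP)⟩
  have key : ∀ P : A[X], P ∈ M ∨ P.degree < (0:ℕ) → P ∈ M := by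
    rintro P (h | h)
    · exact h
    · have : P = 0 := by
        by_contra hP
        rw [degree_eq_natDegree hP] at h
        exact absurd h (by simp)
      rwa [this]
  exact ⟨M, (Finset.subset_insert _ _).trans h1, fun P hP => key _ (h3.1 P hP), 
    fun P hP => key _ (h3.2.1 P hP), fun P hP Q hQ => key _ (h3.2.2 P hP Q hQ)⟩

def Agree (φ ψ : A →+* ℝ) (M : Finset A[X]) : Prop :=
  ∀ P ∈ M, ∀ i, SignType.sign (φ (P.coeff i)) = SignType.sign (ψ (P.coeff i))

lemma Agree.nz {φ ψ : A →+* ℝ} {M : Finset A[X]} (h : Agree φ ψ M) {P : A[X]} (hP : P ∈ M) :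
    P.map φ = 0 ↔ P.map ψ = 0 := by
  simp only [Polynomial.ext_iff, Polynomial.coeff_map, Polynomial.coeff_zero]
  exact ⟨fun h' i => sign_zero_congr (h P hP i) (h' i), fun h' i => sign_zero_congr (h P hP i).symm (h' i)⟩

def Down (M S : Finset A[X]) : Prop := S ⊆ M ∧ ∀ P ∈ S, ∀ Q ∈ M, Q.degree < P.degree → Q ∈ S

lemma map_eraseLead {φ : A →+* ℝ} {P : A[X]} (h : φ P.leadingCoeff = 0) :
    P.map φ = P.eraseLead.map φ := by
  conv_lhs => rw [← eraseLead_add_C_mul_X_pow P]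
  rw [Polynomial.map_add, Polynomial.map_mul, Polynomial.map_C, h]
  simp

/-- a representative with nonvanishing leading coefficient -/
lemma exists_trunc {φ : A →+* ℝ} {M S : Finset A[X]} (hM : Closed M) (hS : Down M S) (d : ℕ) :
    ∀ Q ∈ S, Q.degree < d → Q.map φ ≠ 0 → ∃ Q0 ∈ S, Q0.map φ = Q.map φ ∧ φ Q0.leadingCoeff ≠ 0 := by
  induction d with
  | zero =>
    intro Q hQ hd h0
    exfalso; apply h0
    have : Q = 0 := by
      by_contra hP
      rw [degree_eq_natDegree hP] at hd
      exact absurd hd (by simp)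
    simp [this]
  | succ d ih =>
    intro Q hQ hd h0
    by_cases hl : φ Q.leadingCoeff = 0
    · have hQ0 : Q ≠ 0 := by rintro rfl; simp at h0
      have hlt := degree_eraseLead_lt hQ0
      rw [map_eraseLead hl] at h0 ⊢
      exact ih _ (hS.2 Q hQ _ (hM.era _ (hS.1 hQ)) hlt) (deg_step hlt hd) h0
    · exact ⟨Q, hQ, rfl, hl⟩

lemma sign_at_root {φ ψ : A →+* ℝ} {M S : Finset A[X]} (hM : Closed M) (hag : Agree φ ψ M)
    (hS : Down M S) (P : A[X]) (hPM : P ∈ M) (hmax : ∀ Q ∈ S, Q.degree ≤ P.degree)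
    (hlow : ∀ Q ∈ M, Q.degree < P.degree → Q ∈ S) (a b : ℝ) (hab : Rel φ ψ S a b)
    (ha : a ∈ Zs φ S) : SignType.sign ((P.map φ).eval a) = SignType.sign ((P.map ψ).eval b) := by
  obtain ⟨Q', hQ'S, hQ'0, hQ'r⟩ := ha
  obtain ⟨Q, hQS, hQe, hQl⟩ := exists_trunc hM hS (Q'.natDegree + 1) Q' hQ'S
    (degree_le_natDegree.trans_lt (by exact_mod_cast Nat.lt_succ_self _)) hQ'0
  rw [← hQe] at hQ'0 hQ'r
  have hdeg : 0 < Q.natDegree := by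
    by_contra hc
    have h1 := Polynomial.eq_C_of_natDegree_le_zero (not_lt.1 hc)
    rw [h1] at hQ'0 hQ'r
    simp at hQ'0 hQ'r
    exact hQ'0 hQ'r
  obtain ⟨hd, T, k, hE⟩ := prem_spec P Q hdeg (natDegree_le_natDegree (hmax Q hQS))
  have hpS : prem P Q ∈ S := hlow _ (hM.pre _ hPM _ (hS.1 hQS)) (hd.trans_le (hmax Q hQS))
  have hb : (Q.map ψ).eval b = 0 := sign_zero_congr (hab Q hQS) hQ'r
  have e1 : (φ Q.leadingCoeff)^k * (P.map φ).eval a = ((prem P Q).map φ).eval a := by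
    have := congrArg (fun R => (R.map φ).eval a) hE
    simpa [hQ'r] using this
  have e2 : (ψ Q.leadingCoeff)^k * (P.map ψ).eval b = ((prem P Q).map ψ).eval b := by
    have := congrArg (fun R => (R.map ψ).eval b) hE
    simpa [hb] using this
  have hs := hab _ hpS
  rw [← e1, ← e2, sign_mul, sign_mul, sign_pow, sign_pow] at hs
  have hl : SignType.sign (φ Q.leadingCoeff) = SignType.sign (ψ Q.leadingCoeff) := hag Q (hS.1 hQS) _
  rw [← hl] at hs
  refine mul_left_cancel₀ ?_ hs
  exact pow_ne_zero _ (by simpa using hQl)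

lemma step1 {φ ψ : A →+* ℝ} {M S : Finset A[X]} (hM : Closed M) (hag : Agree φ ψ M)
    (hS : Down M S) (P : A[X]) (hPM : P ∈ M) (hmax : ∀ Q ∈ S, Q.degree ≤ P.degree)
    (hlow : ∀ Q ∈ M, Q.degree < P.degree → Q ∈ S)
    (t1 : ∀ x, ∃ y, Rel φ ψ S x y) (t2 : ∀ y, ∃ x, Rel φ ψ S x y) (x : ℝ) :
    ∃ y, Rel φ ψ S x y ∧ SignType.sign ((P.map φ).eval x) = SignType.sign ((P.map ψ).eval y) := by
  by_cases hP0 : P = 0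
  · obtain ⟨y, hy⟩ := t1 x
    exact ⟨y, hy, by simp [hP0]⟩
  have hD : derivative P ∈ S := hlow _ (hM.der _ hPM) (degree_derivative_lt hP0)
  by_cases hd : (derivative P).map φ = 0
  · obtain ⟨y, hy⟩ := t1 x
    refine ⟨y, hy, ?_⟩
    have hd' := (hag.nz (hM.der _ hPM)).1 hd
    rw [← derivative_map] at hd hd'
    rw [eq_C_of_derivative_eq_zero hd, eq_C_of_derivative_eq_zero hd']
    simpa using hag P hPM 0
  · have hDC : DClosed S := by
      intro Q hQ
      by_cases hQ0 : Q = 0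
      · rw [hQ0] at hQ ⊢; simpa using hQ
      · exact hS.2 Q hQ _ (hM.der _ (hS.1 hQ)) (degree_derivative_lt hQ0)
    exact extend hDC (fun Q hQ => hag.nz (hS.1 hQ)) t1 t2 P hD hd
      (fun a b hab ha => sign_at_root hM hag hS P hPM hmax hlow a b hab ha) x

lemma Agree.symm {φ ψ : A →+* ℝ} {M : Finset A[X]} (h : Agree φ ψ M) : Agree ψ φ M :=
  fun P hP i => (h P hP i).symm

lemma matched {φ ψ : A →+* ℝ} {M : Finset A[X]} (hM : Closed M) (hag : Agree φ ψ M) (S : Finset A[X]) :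
    Down M S → (∀ x, ∃ y, Rel φ ψ S x y) ∧ (∀ y, ∃ x, Rel φ ψ S x y) := by
  classical
  induction S using Finset.induction_on_max_value (fun P : A[X] => P.degree) with
  | empty => intro _; exact ⟨fun x => ⟨0, fun P hP => by simp at hP⟩, fun x => ⟨0, fun P hP => by simp at hP⟩⟩
  | insert P S hPS hmax ih =>
    intro hdown
    have hlow : ∀ Q ∈ M, Q.degree < P.degree → Q ∈ S := by
      intro Q hQ hlt
      rcases Finset.mem_insert.1 (hdown.2 P (Finset.mem_insert_self _ _) Q hQ hlt) with h | h
      · rw [h] at hlt; exact absurd hlt (lt_irrefl _)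
      · exact h
    have hS : Down M S := ⟨(Finset.subset_insert _ _).trans hdown.1, fun P' hP' Q hQ hlt => 
      hlow Q hQ (hlt.trans_le (hmax P' hP'))⟩
    have hPM : P ∈ M := hdown.1 (Finset.mem_insert_self _ _)
    obtain ⟨t1, t2⟩ := ih hS
    constructor
    · intro x
      obtain ⟨y, hy, hs⟩ := step1 hM hag hS P hPM hmax hlow t1 t2 x
      refine ⟨y, fun Q hQ => ?_⟩
      rcases Finset.mem_insert.1 hQ with rfl | h
      · exact hs
      · exact hy Q h
    · intro x
      obtain ⟨y, hy, hs⟩ := step1 hM hag.symm hS P hPM hmax hlow 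
        (fun x => (t2 x).imp (fun _ h => h.symm)) (fun x => (t1 x).imp (fun _ h => h.symm)) x
      refine ⟨y, fun Q hQ => ?_⟩
      rcases Finset.mem_insert.1 hQ with rfl | h
      · exact hs.symm
      · exact (hy Q h).symm

/-- Quantifier elimination, one variable. -/
theorem det_one (L : Finset A[X]) : ∃ C : Finset A, ∀ φ ψ : A →+* ℝ,
    (∀ c ∈ C, SignType.sign (φ c) = SignType.sign (ψ c)) → ∀ x : ℝ, ∃ y : ℝ, Rel φ ψ L x y := by
  classical
  obtain ⟨M, hLM, hM⟩ := closure_exists L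
  refine ⟨M.biUnion (fun P => P.coeffs ∪ {0}), fun φ ψ h x => ?_⟩
  have hag : Agree φ ψ M := by
    intro P hP i
    apply h
    rw [Finset.mem_biUnion]
    refine ⟨P, hP, ?_⟩
    by_cases h0 : P.coeff i = 0
    · simp [h0]
    · exact Finset.mem_union_left _ (coeff_mem_coeffs h0)
  obtain ⟨y, hy⟩ := (matched hM hag M ⟨Finset.Subset.refl _, fun _ _ Q hQ _ => hQ⟩).1 x
  exact ⟨y, fun P hP => hy P (hLM hP)⟩

/-- Quantifier elimination, several variables. -/
theorem det_many (n : ℕ) : ∀ (L : Finset (MvPolynomial (Fin n) A)), ∃ C : Finset A, ∀ φ ψ : A →+* ℝ,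
    (∀ c ∈ C, SignType.sign (φ c) = SignType.sign (ψ c)) → ∀ x : Fin n → ℝ, ∃ y : Fin n → ℝ,
      ∀ P ∈ L, SignType.sign (MvPolynomial.eval₂Hom φ x P) = SignType.sign (MvPolynomial.eval₂Hom ψ y P) := by
  classical
  induction n with
  | zero =>
    intro L
    refine ⟨L.image (fun P => MvPolynomial.coeff 0 P), fun φ ψ h x => ⟨x, fun P hP => ?_⟩⟩
    have := h _ (Finset.mem_image_of_mem _ hP)
    obtain ⟨a, rfl⟩ := MvPolynomial.C_surjective (Fin 0) P
    rw [MvPolynomial.coeff_zero_C] at this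
    simpa using this
  | succ n ih =>
    intro L
    obtain ⟨C1, hC1⟩ := det_one (L.image (MvPolynomial.finSuccEquiv A n))
    obtain ⟨C, hC⟩ := ih C1
    refine ⟨C, fun φ ψ h x => ?_⟩
    obtain ⟨y', hy'⟩ := hC φ ψ h (fun i => x i.succ)
    obtain ⟨y0, hy0⟩ := hC1 _ _ hy' (x 0)
    have key : ∀ (χ : A →+* ℝ) (z0 : ℝ) (z' : Fin n → ℝ) (P : MvPolynomial (Fin (n+1)) A),
        (((MvPolynomial.finSuccEquiv A n P).map (MvPolynomial.eval₂Hom χ z')).eval z0) = 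
          MvPolynomial.eval₂Hom χ (Fin.cons z0 z' : Fin (n+1) → ℝ) P := by
      intro χ z0 z' P
      induction P using MvPolynomial.induction_on with
      | C a => simp [MvPolynomial.finSuccEquiv_apply]
      | add p q hp hq => simp only [map_add, Polynomial.map_add, Polynomial.eval_add, hp, hq]
      | mul_X p i hp =>
        simp only [map_mul, Polynomial.map_mul, Polynomial.eval_mul, hp]
        congr 1
        refine Fin.cases ?_ (fun j => ?_) i
        · simp [MvPolynomial.finSuccEquiv_X_zero]
        · simp [MvPolynomial.finSuccEquiv_X_succ]
    refine ⟨Fin.cons y0 y', fun P hP => ?_⟩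
    have := hy0 _ (Finset.mem_image_of_mem _ hP)
    rw [key, key] at this
    rw [← this]
    congr 3
    funext i
    refine Fin.cases rfl (fun j => rfl) i
end Reg

open MvPolynomial
namespace Reg
open Polynomial Set Filter Topology

lemma dominate (c : ℝ[X][X]) (N : ℕ) (hN : 1 ≤ N) (hc : ∀ i, (c.coeff i).natDegree < N) :
    ∀ᶠ u : ℝ in atTop, ∀ w w' : ℝ, u ^ N ≤ w → u ^ N ≤ w' →
      SignType.sign ((c.map (Polynomial.evalRingHom u)).eval w) =
      SignType.sign ((c.map (Polynomial.evalRingHom u)).eval w') := by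
  by_cases h0 : c = 0
  · simp [h0]
  have hl : c.leadingCoeff ≠ 0 := leadingCoeff_ne_zero.2 h0
  have e1 : ∀ᶠ u : ℝ in atTop, ¬ (c.leadingCoeff).IsRoot u := Polynomial.eventually_atTop_not_isRoot _ hl
  have e2 : ∀ᶠ u : ℝ in atTop, ∀ i ∈ Finset.range c.natDegree,
      |(c.coeff i).eval u / (c.leadingCoeff * Polynomial.X ^ N).eval u| < 1/2 := by
    rw [Filter.eventually_all_finset]
    intro i _
    have hdeg : (c.coeff i).degree < (c.leadingCoeff * Polynomial.X ^ N).degree := by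
      have hne : c.leadingCoeff * Polynomial.X ^ N ≠ 0 := mul_ne_zero hl (pow_ne_zero _ Polynomial.X_ne_zero)
      rw [degree_eq_natDegree hne, natDegree_mul_X_pow N hl]
      refine degree_le_natDegree.trans_lt ?_
      have := hc i
      exact_mod_cast (by omega : (c.coeff i).natDegree < c.leadingCoeff.natDegree + N)
    have := (div_tendsto_atTop_zero_of_degree_lt _ _ hdeg).abs
    rw [abs_zero] at this
    exact this.eventually (gt_mem_nhds (by norm_num))
  filter_upwards [e1, e2, eventually_ge_atTop 2] with u h1 h2 hu w w' hw hw'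
  have hu1 : u ≤ u ^ N := le_self_pow₀ (by linarith) (by omega)
  have hlu : (c.leadingCoeff).eval u ≠ 0 := h1
  set q := c.map (Polynomial.evalRingHom u) with hq
  have hlq : Polynomial.evalRingHom u c.leadingCoeff ≠ 0 := hlu
  have hnd : q.natDegree = c.natDegree := natDegree_map_of_leadingCoeff_ne_zero _ hlq
  have hlc : q.leadingCoeff = (c.leadingCoeff).eval u := leadingCoeff_map_of_leadingCoeff_ne_zero _ hlq
  have hq0 : q ≠ 0 := by
    rw [← leadingCoeff_ne_zero, hlc]; exact hlu
  have hcb : (q.cauchyBound : ℝ) ≤ u ^ N := by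
    have hs : Finset.sup (Finset.range q.natDegree) (fun i => ‖q.coeff i‖₊) ≤ 
        ‖(c.leadingCoeff).eval u‖₊ * (u^N/2).toNNReal := by
      apply Finset.sup_le
      intro i hi
      rw [hnd] at hi
      have := h2 i hi
      rw [← NNReal.coe_le_coe]
      push_cast
      rw [Real.coe_toNNReal _ (by positivity), hq, Polynomial.coeff_map]
      simp only [Polynomial.coe_evalRingHom, Real.norm_eq_abs]
      rw [Polynomial.eval_mul, Polynomial.eval_pow, Polynomial.eval_X, abs_div, abs_mul, 
        abs_of_pos (by positivity : (0:ℝ) < u^N), div_lt_iff₀ (by positivity)] at this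
      linarith
    have : q.cauchyBound ≤ (u^N/2).toNNReal + 1 := by
      rw [cauchyBound, hlc]
      gcongr
      refine div_le_of_le_mul₀ (by positivity) (by positivity) ?_
      rw [mul_comm]; exact hs
    have := NNReal.coe_le_coe.2 this
    push_cast at this
    rw [Real.coe_toNNReal _ (by positivity)] at this
    linarith
  apply sign_const
  intro z hz hz0
  have hzN : u ^ N ≤ z := by
    rcases mem_uIcc.1 hz with h | h
    · exact hw.trans h.1
    · exact hw'.trans h.1
  have := IsRoot.norm_lt_cauchyBound hq0 hz0
  have h3 : |z| < q.cauchyBound := by exact_mod_cast this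
  linarith [le_abs_self z]

abbrev PA (n : ℕ) := Polynomial (Polynomial (MvPolynomial (Fin n) ℝ))

noncomputable def chi {n : ℕ} (x : Fin n → ℝ) (u w : ℝ) : PA n →+* ℝ :=
  (Polynomial.evalRingHom w).comp ((Polynomial.mapRingHom (Polynomial.evalRingHom u)).comp 
    (Polynomial.mapRingHom (Polynomial.mapRingHom (MvPolynomial.eval x))))

noncomputable def emb (n : ℕ) : ℝ →+* PA n := Polynomial.C.comp (Polynomial.C.comp MvPolynomial.C)

lemma chi_emb {n : ℕ} {A : Type*} [CommRing A] (χ : A →+* ℝ) (em : ℝ →+* A) 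
    (p : MvPolynomial (Fin n) ℝ) (y : Fin n → ℝ) :
    MvPolynomial.eval₂Hom χ y (MvPolynomial.map em p) = MvPolynomial.eval y p := by
  have : χ.comp em = RingHom.id ℝ := Subsingleton.elim _ _
  rw [MvPolynomial.coe_eval₂Hom, MvPolynomial.eval₂_map, this]
  rfl

lemma det_spec {A : Type*} [CommRing A] (n : ℕ) (p1 q1 p2 q2 : MvPolynomial (Fin n) ℝ) 
    (em : ℝ →+* A) (xs : Fin n → A) (U W : A) : ∃ C : Finset A, ∀ χ χ' : A →+* ℝ, 
      (∀ c ∈ C, SignType.sign (χ c) = SignType.sign (χ' c)) → 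
      ∀ y : Fin n → ℝ, (0 < 1 - ∑ i, (y i - χ (xs i))^2 ∧ eval y q1 * eval y q2 ≠ 0 ∧ 
        0 < (χ U)^2 * (eval y p1)^2 - (eval y q1)^2 ∧ 0 < (eval y p2)^2 - (χ W)^2 * (eval y q2)^2) →
      ∃ y : Fin n → ℝ, (0 < 1 - ∑ i, (y i - χ' (xs i))^2 ∧ eval y q1 * eval y q2 ≠ 0 ∧ 
        0 < (χ' U)^2 * (eval y p1)^2 - (eval y q1)^2 ∧ 
        0 < (eval y p2)^2 - (χ' W)^2 * (eval y q2)^2) := by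
  classical
  let e := MvPolynomial.map (σ := Fin n) em
  let P1 : MvPolynomial (Fin n) A := 
    1 - ∑ i, (MvPolynomial.X i - MvPolynomial.C (xs i))^2
  let P2 : MvPolynomial (Fin n) A := e q1 * e q2
  let P3 : MvPolynomial (Fin n) A := (MvPolynomial.C U)^2 * (e p1)^2 - (e q1)^2
  let P4 : MvPolynomial (Fin n) A := (e p2)^2 - (MvPolynomial.C W)^2 * (e q2)^2
  obtain ⟨C, hC⟩ := det_many n ({P1, P2, P3, P4} : Finset (MvPolynomial (Fin n) A))
  refine ⟨C, fun χ χ' hχ y hy => ?_⟩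
  have ev1 : ∀ (χ : A →+* ℝ) y, MvPolynomial.eval₂Hom χ y P1 = 1 - ∑ i, (y i - χ (xs i))^2 := by
    intro χ y; simp [P1]
  have ev2 : ∀ (χ : A →+* ℝ) y, MvPolynomial.eval₂Hom χ y P2 = eval y q1 * eval y q2 := by
    intro χ y; simp only [P2, e, map_mul, chi_emb]
  have ev3 : ∀ (χ : A →+* ℝ) y, MvPolynomial.eval₂Hom χ y P3 = 
      (χ U)^2 * (eval y p1)^2 - (eval y q1)^2 := by
    intro χ y; simp only [P3, e, map_mul, map_sub, map_pow, chi_emb]; simp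
  have ev4 : ∀ (χ : A →+* ℝ) y, MvPolynomial.eval₂Hom χ y P4 = 
      (eval y p2)^2 - (χ W)^2 * (eval y q2)^2 := by
    intro χ y; simp only [P4, e, map_mul, map_sub, map_pow, chi_emb]; simp
  obtain ⟨z, hz⟩ := hC χ χ' hχ y
  refine ⟨z, ?_⟩
  have h1 := hz P1 (by simp)
  have h2 := hz P2 (by simp)
  have h3 := hz P3 (by simp)
  have h4 := hz P4 (by simp)
  rw [ev1, ev1] at h1
  rw [ev2, ev2] at h2
  rw [ev3, ev3] at h3
  rw [ev4, ev4] at h4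
  exact ⟨sign_pos_congr h1 hy.1, fun h => hy.2.1 (sign_zero_congr h2.symm h), 
    sign_pos_congr h3 hy.2.2.1, sign_pos_congr h4 hy.2.2.2⟩

theorem loj_aux (n : ℕ) (p1 q1 p2 q2 : MvPolynomial (Fin n) ℝ) : ∃ N : ℕ, 1 ≤ N ∧ ∀ x : Fin n → ℝ,
    ∀ᶠ u : ℝ in atTop, ∀ w w' : ℝ, u ^ N ≤ w → u ^ N ≤ w' → 
      ∀ y : Fin n → ℝ, (0 < 1 - ∑ i, (y i - x i)^2 ∧ eval y q1 * eval y q2 ≠ 0 ∧ 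
        0 < u^2 * (eval y p1)^2 - (eval y q1)^2 ∧ 0 < (eval y p2)^2 - w^2 * (eval y q2)^2) →
      ∃ y : Fin n → ℝ, (0 < 1 - ∑ i, (y i - x i)^2 ∧ eval y q1 * eval y q2 ≠ 0 ∧ 
        0 < u^2 * (eval y p1)^2 - (eval y q1)^2 ∧ 0 < (eval y p2)^2 - w'^2 * (eval y q2)^2) := by
  classical
  obtain ⟨C, hC⟩ := det_spec (A := PA n) n p1 q1 p2 q2 (emb n) 
    (fun i => Polynomial.C (Polynomial.C (MvPolynomial.X i))) (Polynomial.C Polynomial.X) Polynomial.X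
  let N : ℕ := (C.sup (fun c => (c.support).sup (fun i => (c.coeff i).natDegree))) + 1
  refine ⟨N, by omega, fun x => ?_⟩
  have hdom : ∀ᶠ u : ℝ in atTop, ∀ c ∈ C, ∀ w w' : ℝ, u ^ N ≤ w → u ^ N ≤ w' →
      SignType.sign (chi x u w c) = SignType.sign (chi x u w' c) := by
    rw [Filter.eventually_all_finset]
    intro c hcC
    refine dominate (c.map (Polynomial.mapRingHom (MvPolynomial.eval x))) N (by omega) (fun i => ?_)
    rw [Polynomial.coeff_map]
    refine (natDegree_map_le).trans_lt ?_
    by_cases hi : c.coeff i = 0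
    · simp [hi, N]
    · have h1 := Finset.le_sup (f := fun i => (c.coeff i).natDegree) (Polynomial.mem_support_iff.2 hi)
      have h2 := Finset.le_sup (f := fun c : PA n => (c.support).sup (fun i => (c.coeff i).natDegree)) hcC
      omega
  filter_upwards [hdom] with u hu w w' hw hw' y hy
  have hx : ∀ u w i, chi x u w (Polynomial.C (Polynomial.C (MvPolynomial.X i))) = x i := by
    intro u w i; simp [chi]
  have hU : ∀ u w, chi x u w (Polynomial.C Polynomial.X) = u := by
    intro u w; simp [chi]
  have hW : ∀ u w, chi x u w Polynomial.X = w := by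
    intro u w; simp [chi]
  have := hC (chi x u w) (chi x u w') (fun c hc => hu c hc w w' hw hw') y
  simp only [hx, hU, hW] at this
  exact this hy

lemma exists_ne_zero_of_open {n : ℕ} (q : MvPolynomial (Fin n) ℝ) (hq : q ≠ 0) (O : Set (Fin n → ℝ))
    (hO : IsOpen O) (hne : O.Nonempty) : ∃ y ∈ O, eval y q ≠ 0 := by
  by_contra hcon
  push Not at hcon
  apply hq
  obtain ⟨a, ha⟩ := hne
  obtain ⟨ε, hε, hb⟩ := Metric.isOpen_iff.1 hO a ha
  refine MvPolynomial.funext_set (fun i => Metric.ball (a i) ε) (fun i => ?_) (fun x hx => ?_)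
  · rw [Real.ball_eq_Ioo]; exact Set.Ioo_infinite (by linarith)
  · rw [map_zero]
    apply hcon
    apply hb
    rw [ball_pi _ hε]
    exact hx

theorem loj (n : ℕ) (f g : (Fin n → ℝ) → ℝ) (hf : Continuous f) 
    (hg : ContinuousOn g {x | f x ≠ 0}) (p1 q1 p2 q2 : MvPolynomial (Fin n) ℝ)
    (hq1 : q1 ≠ 0) (hq2 : q2 ≠ 0) (h1 : ∀ x, eval x q1 * f x = eval x p1) 
    (h2 : ∀ x, f x ≠ 0 → eval x q2 * g x = eval x p2) :
    ∃ N : ℕ, ∀ x, f x = 0 → ∀ᶠ y in 𝓝 x, f y ≠ 0 → |f y| ^ N * |g y| ≤ 2 ^ N := by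
  obtain ⟨N, hN, h⟩ := loj_aux n p1 q1 p2 q2
  refine ⟨N, fun x hx => ?_⟩
  have hUo : IsOpen {x | f x ≠ 0} := isOpen_ne_fun hf continuous_const
  have hball : Continuous (fun y : Fin n → ℝ => ∑ i, (y i - x i)^2) := by fun_prop
  -- generic points
  have hgen : ∀ᶠ u : ℝ in atTop, ∀ y, ∑ i, (y i - x i)^2 < 1 → eval y q1 * eval y q2 ≠ 0 → 1 < u * |f y| → 
      |g y| ≤ u ^ N := by
    filter_upwards [h x, eventually_gt_atTop 0] with u hu hu0 y hy1 hy2 hy3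
    by_contra hcon
    push Not at hcon
    -- compact bound
    have hK : IsCompact {y : Fin n → ℝ | ∑ i, (y i - x i)^2 ≤ 1 ∧ 1 ≤ u * |f y|} := by
      refine Metric.isCompact_of_isClosed_isBounded ?_ ?_
      · exact (isClosed_le hball continuous_const).inter 
          (isClosed_le continuous_const (continuous_const.mul hf.abs))
      · refine (Metric.isBounded_closedBall (x := x) (r := 1)).subset ?_
        rintro y ⟨hy, -⟩
        rw [Metric.mem_closedBall, dist_pi_le_iff zero_le_one]
        intro i
        rw [Real.dist_eq, ← sq_le_one_iff_abs_le_one]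
        exact (Finset.single_le_sum (f := fun i => (y i - x i)^2) (fun j _ => sq_nonneg _) (Finset.mem_univ i)).trans hy
    obtain ⟨B, hB⟩ := hK.exists_bound_of_continuousOn (f := g) (hg.mono (fun y hy h0 => by
      have := hy.2; rw [h0] at this; simp at this; linarith))
    have hcond : ∀ y w, 0 ≤ w → eval y q1 * eval y q2 ≠ 0 → 
        ((0 < u^2 * (eval y p1)^2 - (eval y q1)^2 ∧ 0 < (eval y p2)^2 - w^2 * (eval y q2)^2) ↔ 
        (1 < u * |f y| ∧ w < |g y|)) := by
      intro y w hw hne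
      have hn1 : 0 < (eval y q1)^2 := by have := left_ne_zero_of_mul hne; positivity
      have hn2 : 0 < (eval y q2)^2 := by have := right_ne_zero_of_mul hne; positivity
      have a1 : (0 < u^2 * (eval y p1)^2 - (eval y q1)^2) ↔ 1 < u * |f y| := by
        have : u^2 * (eval y p1)^2 - (eval y q1)^2 = (eval y q1)^2 * ((u * |f y|)^2 - 1) := by
          rw [← h1, mul_pow u, sq_abs]; ring
        rw [this, mul_pos_iff_of_pos_left hn1, sub_pos, one_lt_sq_iff₀ (by positivity)]
      rw [a1]
      apply and_congr_right
      intro hfy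
      have hfy0 : f y ≠ 0 := by rintro h0; rw [h0] at hfy; simp at hfy; linarith
      have : (eval y p2)^2 - w^2 * (eval y q2)^2 = (eval y q2)^2 * (|g y|^2 - w^2) := by
        rw [← h2 y hfy0, sq_abs]; ring
      rw [this, mul_pos_iff_of_pos_left hn2, sub_pos, sq_lt_sq₀ hw (abs_nonneg _)]
    have hu0' : 0 ≤ u ^ N := by positivity
    obtain ⟨z, hz1, hz2, hz3⟩ := hu (u^N) (max (u^N) B) le_rfl (le_max_left _ _) y 
      ⟨by linarith, hy2, (hcond y _ hu0' hy2).2 ⟨hy3, hcon⟩⟩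
    rw [hcond z _ (hu0'.trans (le_max_left _ _)) hz2] at hz3
    have := hB z ⟨by linarith, hz3.1.le⟩
    rw [Real.norm_eq_abs] at this
    exact absurd (this.trans (le_max_right (u^N) B)) (not_le.2 hz3.2)
  -- all points
  have hall : ∀ᶠ u : ℝ in atTop, ∀ y, ∑ i, (y i - x i)^2 < 1 → 1 < u * |f y| → |g y| ≤ u ^ N := by
    filter_upwards [hgen] with u hu y hy1 hy3
    by_contra hcon
    push Not at hcon
    have hO2 : IsOpen ({x | f x ≠ 0} ∩ {y | u ^ N < |g y|}) := 
      hg.abs.isOpen_inter_preimage hUo isOpen_Ioi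
    have hO : IsOpen (({y : Fin n → ℝ | ∑ i, (y i - x i)^2 < 1} ∩ {y | 1 < u * |f y|}) ∩ 
        ({x | f x ≠ 0} ∩ {y | u ^ N < |g y|})) := 
      ((isOpen_lt hball continuous_const).inter 
        (isOpen_lt continuous_const (continuous_const.mul hf.abs))).inter hO2
    have hfy0 : f y ≠ 0 := by rintro h0; rw [h0] at hy3; simp at hy3; linarith
    obtain ⟨z, ⟨⟨hz1, hz2⟩, hz3, hz4⟩, hz5⟩ := exists_ne_zero_of_open (q1 * q2) (mul_ne_zero hq1 hq2) _ hO
      ⟨y, ⟨hy1, hy3⟩, hfy0, hcon⟩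
    rw [map_mul] at hz5
    exact absurd (hu z hz1 hz5 hz2) (not_le.2 hz4)
  obtain ⟨u0, hu0⟩ := eventually_atTop.1 hall
  have b1 : ∀ᶠ y in 𝓝 x, ∑ i, (y i - x i)^2 < 1 := 
    hball.continuousAt.eventually (gt_mem_nhds (by simp))
  have b2 : ∀ᶠ y in 𝓝 x, |u0| * |f y| < 2 := 
    (continuous_const.mul hf.abs).continuousAt.eventually (gt_mem_nhds (by simp [hx]))
  filter_upwards [b1, b2] with y hy1 hy2 hy0
  have hpos : 0 < |f y| := abs_pos.2 hy0
  have := hu0 (2 / |f y|) (by rw [le_div_iff₀ hpos]; nlinarith [le_abs_self u0]) y hy1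
    (by field_simp; norm_num)
  rw [div_pow, le_div_iff₀ (by positivity)] at this
  linarith
end Reg

open MvPolynomial
namespace Reg
open Set Filter Topology

lemma poly_dir {n : ℕ} (v : Fin n → ℝ) (p : MvPolynomial (Fin n) ℝ) :
    ∃ p' : MvPolynomial (Fin n) ℝ, ∀ x, ∃ L : (Fin n → ℝ) →L[ℝ] ℝ, 
      HasFDerivAt (fun y => eval y p) L x ∧ L v = eval x p' := by
  induction p using MvPolynomial.induction_on with
  | C a => 
    refine ⟨0, fun x => ⟨0, ?_, by simp⟩⟩
    simp only [MvPolynomial.eval_C]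
    exact hasFDerivAt_const _ _
  | add p q hp hq => 
    obtain ⟨p', hp⟩ := hp
    obtain ⟨q', hq⟩ := hq
    refine ⟨p' + q', fun x => ?_⟩
    obtain ⟨L, hL, hLv⟩ := hp x
    obtain ⟨M, hM, hMv⟩ := hq x
    refine ⟨L + M, ?_, by simp [hLv, hMv]⟩
    simp only [MvPolynomial.eval_add]
    exact hL.add hM
  | mul_X p i hp => 
    obtain ⟨p', hp⟩ := hp
    refine ⟨p * MvPolynomial.C (v i) + MvPolynomial.X i * p', fun x => ?_⟩
    obtain ⟨L, hL, hLv⟩ := hp x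
    have hX : HasFDerivAt (fun y : Fin n → ℝ => y i) 
      (ContinuousLinearMap.proj (R := ℝ) (φ := fun _ : Fin n => ℝ) i) x := hasFDerivAt_apply i x
    have hpX := hL.mul hX
    refine ⟨_, hpX.congr_of_eventuallyEq (Filter.Eventually.of_forall fun y => ?_), ?_⟩
    · simp
    · simp [hLv]

theorem ext_aux (n : ℕ) (f : (Fin n → ℝ) → ℝ) (p1 q1 : MvPolynomial (Fin n) ℝ) (hq1 : q1 ≠ 0) 
    (h1 : ∀ x, eval x q1 * f x = eval x p1) : ∀ k : ℕ, ContDiff ℝ k f → 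
    ∀ (g : (Fin n → ℝ) → ℝ) (p2 q2 : MvPolynomial (Fin n) ℝ), q2 ≠ 0 → 
    ContDiffOn ℝ k g {x | f x ≠ 0} → (∀ x, f x ≠ 0 → eval x q2 * g x = eval x p2) → 
    ∃ N : ℕ, ∀ m ≥ N, ContDiff ℝ k (fun x => f x ^ m * g x) := by
  intro k
  induction k with
  | zero =>
    intro hf g p2 q2 hq2 hg h2
    have hf' : Continuous f := hf.continuous
    have hU : IsOpen {x | f x ≠ 0} := isOpen_ne_fun hf' continuous_const
    obtain ⟨N, hN⟩ := loj n f g hf' hg.continuousOn p1 q1 p2 q2 hq1 hq2 h1 h2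
    refine ⟨N + 1, fun m hm => ?_⟩
    rw [Nat.cast_zero, contDiff_zero, continuous_iff_continuousAt]
    intro x
    by_cases hx : f x = 0
    · have h0 : f x ^ m * g x = 0 := by rw [hx, zero_pow (by omega), zero_mul]
      rw [ContinuousAt, h0]
      have hfx : Tendsto (fun y => |f y| * 2 ^ N) (𝓝 x) (𝓝 0) := by
        have hc : Continuous (fun y => |f y| * 2 ^ N) := hf'.abs.mul continuous_const
        simpa [hx] using hc.tendsto x
      have hb : ∀ᶠ y in 𝓝 x, |f y| < 1 := hf'.abs.continuousAt.eventually (gt_mem_nhds (by simp [hx]))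
      refine squeeze_zero_norm' ?_ hfx
      filter_upwards [hN x hx, hb] with y hy hy1
      by_cases hy0 : f y = 0
      · rw [hy0, zero_pow (by omega)]; simp
      · have := hy hy0
        rw [Real.norm_eq_abs, abs_mul, abs_pow]
        calc |f y| ^ m * |g y| ≤ |f y| ^ (N+1) * |g y| := by
              exact mul_le_mul_of_nonneg_right (pow_le_pow_of_le_one (abs_nonneg _) hy1.le hm) 
                (abs_nonneg _)
          _ = |f y| * (|f y|^N * |g y|) := by ring
          _ ≤ |f y| * 2 ^ N := by gcongr
    · have : ContinuousAt g x := hg.continuousOn.continuousAt (hU.mem_nhds hx)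
      exact (hf'.continuousAt.pow m).mul this
  | succ k ih =>
    intro hf g p2 q2 hq2 hg h2
    have hf' : Continuous f := hf.continuous
    have hU : IsOpen {x | f x ≠ 0} := isOpen_ne_fun hf' continuous_const
    have hle : ((k : ℕ) : WithTop ℕ∞) ≤ ((k + 1 : ℕ) : WithTop ℕ∞) := by exact_mod_cast Nat.le_succ k
    have hfk : ContDiff ℝ k f := hf.of_le hle
    push_cast at hf hg ⊢
    have hfd : Differentiable ℝ f := hf.differentiable (by simp)
    have hgd : ∀ x, f x ≠ 0 → DifferentiableAt ℝ g x := fun x hx => 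
      (hg.differentiableOn (by simp)).differentiableAt (hU.mem_nhds hx)
    obtain ⟨N, hN⟩ := loj n f g hf' hg.continuousOn p1 q1 p2 q2 hq1 hq2 h1 h2
    obtain ⟨N0, hN0⟩ := ih hfk g p2 q2 hq2 (hg.of_le (by exact_mod_cast hle)) h2
    have hi : ∀ i : Fin n, ∃ M : ℕ, ∀ m ≥ M, 
        ContDiff ℝ k (fun x => f x ^ m * fderiv ℝ g x (Pi.single i 1)) := by
      intro i
      obtain ⟨p', hp'⟩ := poly_dir (Pi.single i 1) p2
      obtain ⟨q', hq'⟩ := poly_dir (Pi.single i 1) q2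
      refine ih hfk (fun x => fderiv ℝ g x (Pi.single i 1)) (q2 * p' - p2 * q') (q2 * q2) 
        (mul_ne_zero hq2 hq2) ?_ ?_
      · have : ContDiffOn ℝ k (fderiv ℝ g) {x | f x ≠ 0} := 
          ((contDiffOn_succ_iff_fderiv_of_isOpen hU).1 hg).2.2
        exact this.clm_apply contDiffOn_const
      · intro x hx
        obtain ⟨L, hL, hLv⟩ := hp' x
        obtain ⟨M, hM, hMv⟩ := hq' x
        have e1 := hM.mul (hgd x hx).hasFDerivAt
        have e2 : HasFDerivAt (fun y => eval y q2 * g y) L x := by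
          refine hL.congr_of_eventuallyEq ?_
          filter_upwards [hU.mem_nhds hx] with y hy using h2 y hy
        have e3 := congrArg (fun T => T (Pi.single i (1:ℝ))) (e1.unique e2)
        simp [hMv, hLv] at e3
        simp only [map_mul, map_sub]
        linear_combination (eval x q2) * e3 - (eval x q') * h2 x hx
    choose M hM using hi
    refine ⟨N + N0 + (∑ i, M i) + 3, fun m hm => ?_⟩
    have hder : ∀ x, HasFDerivAt (fun x => f x ^ m * g x) 
        (f x ^ m • fderiv ℝ g x + (m * (f x ^ (m-1) * g x)) • fderiv ℝ f x) x := by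
      intro x
      by_cases hx : f x = 0
      · have hL : f x ^ m • fderiv ℝ g x + (m * (f x ^ (m-1) * g x)) • fderiv ℝ f x = 0 := by
          rw [hx, zero_pow (by omega), zero_pow (by omega)]; simp
        rw [hL, hasFDerivAt_iff_isLittleO]
        have hb : ∀ᶠ y in 𝓝 x, |f y| < 1 := 
          hf'.abs.continuousAt.eventually (gt_mem_nhds (by simp [hx]))
        have o1 : (fun y => f y) =O[𝓝 x] (fun y => y - x) := by
          simpa [hx] using (hfd x).hasFDerivAt.isBigO_sub
        have o2 : (fun y => f y) =o[𝓝 x] (fun _ => (1:ℝ)) := by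
          rw [Asymptotics.isLittleO_one_iff]
          simpa [hx] using hf'.tendsto x
        have o3 : (fun y => f y ^ m * g y) =O[𝓝 x] (fun y => f y * f y) := by
          refine Asymptotics.IsBigO.of_bound (2^N) ?_
          filter_upwards [hN x hx, hb] with y hy hy1
          by_cases hy0 : f y = 0
          · rw [hy0, zero_pow (by omega)]; simp
          · have := hy hy0
            rw [Real.norm_eq_abs, abs_mul, abs_pow, Real.norm_eq_abs, abs_mul]
            calc |f y| ^ m * |g y| ≤ |f y| ^ (N+2) * |g y| := by
                  exact mul_le_mul_of_nonneg_right 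
                    (pow_le_pow_of_le_one (abs_nonneg _) hy1.le (by omega)) (abs_nonneg _)
              _ = (|f y|^N * |g y|) * (|f y| * |f y|) := by ring
              _ ≤ 2 ^ N * (|f y| * |f y|) := by gcongr
        have o4 : (fun y => f y * f y) =o[𝓝 x] (fun y => (1:ℝ) * ‖y - x‖) := o2.mul_isBigO o1.norm_right
        simp only [one_mul] at o4
        have o5 := (o3.trans_isLittleO o4).of_norm_right
        have h0 : f x ^ m * g x = 0 := by rw [hx, zero_pow (by omega), zero_mul]
        simpa [h0] using o5
      · have := ((hfd x).hasFDerivAt.pow m).mul (hgd x hx).hasFDerivAt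
        refine this.congr_fderiv ?_
        ext v
        simp
        ring
    rw [contDiff_succ_iff_fderiv_apply]
    refine ⟨fun x => (hder x).differentiableAt, by simp, fun v => ?_⟩
    have hexp : (fun x => fderiv ℝ (fun x => f x ^ m * g x) x v) = fun x => 
        (∑ i, v i * (f x ^ m * fderiv ℝ g x (Pi.single i 1))) + 
          m * (f x ^ (m-1) * g x) * fderiv ℝ f x v := by
      funext x
      rw [(hder x).fderiv]
      have hv : fderiv ℝ g x v = ∑ i, v i * fderiv ℝ g x (Pi.single i 1) := by
        conv_lhs => rw [pi_eq_sum_univ' v]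
        rw [map_sum]
        refine Finset.sum_congr rfl (fun i _ => ?_)
        rw [map_smul, smul_eq_mul]
      simp only [add_apply, smul_apply, smul_eq_mul]
      rw [hv, Finset.mul_sum]
      congr 1
      refine Finset.sum_congr rfl (fun i _ => ?_)
      ring
    rw [hexp]
    refine ContDiff.add (ContDiff.sum fun i _ => contDiff_const.mul (hM i m ?_)) 
      ((contDiff_const.mul (hN0 (m-1) (by omega))).mul ?_)
    · have := Finset.single_le_sum (f := M) (fun _ _ => Nat.zero_le _) (Finset.mem_univ i)
      omega
    · exact (contDiff_succ_iff_fderiv_apply.1 hf).2.2 v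
end Reg

/-- **Regulous functions, Proposition `restriction`**: for a `k`-regulous function `f` on
`ℝⁿ` and `U = D(f) = {x | f x ≠ 0}`, the restriction map `ρ` identifies `R^k(U)` with the
localization `R^k(ℝⁿ)_f`: the restriction `ρ f` is invertible in `R^k(U)`; every
`k`-regulous function on `U` is of the form `ρ(G) · ρ(f)^{-N}`; and `ρ(g) = 0` iff
`f·g = 0` in `R^k(ℝⁿ)`. -/
theorem regulous_localization (n k : ℕ) (f : regulousRing n k)
    (U : Set (Fin n → ℝ)) (hU : U = {x : Fin n → ℝ | (f : (Fin n → ℝ) → ℝ) x ≠ 0}) :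
    -- the restriction of `f` to `U` is a unit of `R^k(U)`
    (∃ h : U → ℝ, IsRegulousOn n k U h ∧
      ∀ x : U, (f : (Fin n → ℝ) → ℝ) (x : Fin n → ℝ) * h x = 1) ∧
    -- every element of `R^k(U)` is `ρ(G) · ρ(f)^{-N}`, i.e. `g · (ρ f)^N = ρ G` on `U`
    (∀ g : U → ℝ, IsRegulousOn n k U g →
      ∃ (G : regulousRing n k) (N : ℕ),
        ∀ x : U, g x * ((f : (Fin n → ℝ) → ℝ) (x : Fin n → ℝ)) ^ N =
          (G : (Fin n → ℝ) → ℝ) (x : Fin n → ℝ)) ∧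
    -- the kernel of the restriction map is the annihilator of `f`
    (∀ g : regulousRing n k,
      (∀ x : U, (g : (Fin n → ℝ) → ℝ) (x : Fin n → ℝ) = 0) ↔ f * g = 0) := by
  have hfm : IsRegulous n k (f : (Fin n → ℝ) → ℝ) := f.2
  obtain ⟨hf, p1, q1, hq1, h1⟩ := hfm
  subst hU
  have hUo : IsOpen {x : Fin n → ℝ | (f : (Fin n → ℝ) → ℝ) x ≠ 0} :=
    isOpen_ne_fun hf.continuous continuous_const
  refine ⟨?_, ?_, ?_⟩
  · refine ⟨fun x => ((f : (Fin n → ℝ) → ℝ) x)⁻¹, ⟨?_, ?_⟩, fun x => mul_inv_cancel₀ x.2⟩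
    · refine ContDiffOn.congr (f := fun x => ((f : (Fin n → ℝ) → ℝ) x)⁻¹)
        (hf.contDiffOn.inv fun x hx => hx) ?_
      intro x hx
      exact Subtype.val_injective.extend_apply
        (fun x : {x : Fin n → ℝ | (f : (Fin n → ℝ) → ℝ) x ≠ 0} =>
          ((f : (Fin n → ℝ) → ℝ) x)⁻¹) 0 ⟨x, hx⟩
    · by_cases hne : {x : Fin n → ℝ | (f : (Fin n → ℝ) → ℝ) x ≠ 0}.Nonempty
      · refine ⟨q1, p1, ?_, ?_⟩
        · rintro rfl
          obtain ⟨y, hy, hy'⟩ := Reg.exists_ne_zero_of_open q1 hq1 _ hUo hne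
          have := h1 y
          rw [map_zero] at this
          exact (mul_ne_zero hy' hy) this
        · rintro ⟨x, hx⟩
          rw [← h1 x]
          exact mul_inv_cancel_right₀ hx _
      · exact ⟨0, 1, one_ne_zero, fun x => (hne ⟨x, x.2⟩).elim⟩
  · rintro g ⟨hg, p2, q2, hq2, h2⟩
    have hext : ∀ x (hx : (f : (Fin n → ℝ) → ℝ) x ≠ 0),
        Function.extend Subtype.val g 0 x = g ⟨x, hx⟩ := fun x hx =>
      Subtype.val_injective.extend_apply g 0 ⟨x, hx⟩
    obtain ⟨N, hN⟩ := Reg.ext_aux n f p1 q1 hq1 h1 k hf (Function.extend Subtype.val g 0) p2 q2 hq2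
      hg (fun x hx => by rw [hext x hx]; exact h2 ⟨x, hx⟩)
    refine ⟨⟨fun x => (f : (Fin n → ℝ) → ℝ) x ^ (N + 1) * Function.extend Subtype.val g 0 x,
      hN (N + 1) (by omega), p1 ^ (N + 1) * p2, q1 ^ (N + 1) * q2,
      mul_ne_zero (pow_ne_zero _ hq1) hq2, fun x => ?_⟩, N + 1, ?_⟩
    · simp only [map_mul, map_pow, ← h1 x]
      by_cases hx : (f : (Fin n → ℝ) → ℝ) x = 0
      · simp [hx]
      · rw [hext x hx, ← h2 ⟨x, hx⟩]
        ring
    · rintro ⟨x, hx⟩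
      simp only
      rw [hext x hx, mul_comm]
  · intro g
    constructor
    · intro h
      apply Subtype.ext
      funext x
      by_cases hx : (f : (Fin n → ℝ) → ℝ) x = 0
      · simp [hx]
      · have := h ⟨x, hx⟩
        simp only at this
        simp [this]
    · rintro h ⟨x, hx⟩
      have h3 := congrFun (congrArg Subtype.val h) x
      exact (mul_eq_zero.1 h3).resolve_left hx
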